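/- Greedy (1 − 1/e)-approximation for monotone submodular maximization: let α be a finite type and f : Finset α → ℝ a monotone (A ⊆ B implies f(A) ≤ f(B)) submodular set function with f(∅) = 0. Define the greedy sequence G₀ = ∅ and G_{t+1} = G_t ∪ {x_{t+1}}, where x_{t+1} is an element maximizing the marginal gain f(G_t ∪ {x}) − f(G_t) over all elements x ∉ G_t. Then for every k ≥ 1, f(G_k) ≥ (1 − (1 − 1/k)^k) · max { f(S) : S ⊆ α, |S| ≤ k }, and in particular f(G_k) ≥ (1 − 1/e) · max { f(S) : S ⊆ α, |S| ≤ k }. -/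

import Mathlib

/-!
Fix `S` with `|S| ≤ k`. By submodularity the gain of adding all of `S` to `G t` is at most the sum
of the single-element gains, hence at most `k` times the gain of the greedy step
(`union_le_add_card_mul`). Monotonicity gives `f S ≤ f (G t ∪ S)`, so each greedy step shrinks the
gap `f S - f (G t)` by a factor `1 - 1 / k`. After `k` steps the gap is at most
`(1 - 1 / k) ^ k * f S`, and `(1 - 1 / k) ^ k ≤ exp (-1)`.
-/

/-- If each single element has marginal gain at most `d` over `A`, then a submodular function gains
at most `|S| * d` from adding `S` to `A`. -/
lemma union_le_add_card_mul {α : Type*} [DecidableEq α] (f : Finset α → ℝ)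
    (hsub : ∀ A B : Finset α, f (A ∪ B) + f (A ∩ B) ≤ f A + f B)
    (hmono : ∀ A B : Finset α, A ⊆ B → f A ≤ f B)
    (A S : Finset α) (d : ℝ) (hd : ∀ y, f (A ∪ {y}) ≤ f A + d) :
    f (A ∪ S) ≤ f A + S.card * d := by
  induction S using Finset.induction_on with
  | empty => simp
  | insert y S hy ih =>
    have h1 := hsub (A ∪ S) (A ∪ {y})
    have h2 : (A ∪ S) ∪ (A ∪ {y}) = A ∪ insert y S := by
      ext z; simp; tauto
    have h3 := hmono A ((A ∪ S) ∩ (A ∪ {y}))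
      (Finset.subset_inter Finset.subset_union_left Finset.subset_union_left)
    rw [h2] at h1
    rw [Finset.card_insert_of_notMem hy]
    push_cast
    linarith [hd y]

/-- Nemhauser–Wolsey–Fisher greedy `(1 − 1/e)`-approximation for maximizing a
monotone submodular set function with `f ∅ = 0` under a cardinality constraint:
the greedy sequence `G₀ = ∅`, `G_{t+1} = G_t ∪ {x_{t+1}}` (with `x_{t+1}` a
marginal-gain maximizer among elements outside `G_t`) satisfies, for every
`k ≥ 1` and every `S` with `|S| ≤ k`,
`f(G_k) ≥ (1 − (1 − 1/k)^k) · f(S) ≥ (1 − 1/e) · f(S)` whenever `f S ≥ 0`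
(indeed `f S ≥ 0` always holds by monotonicity and `f ∅ = 0`). -/
theorem greedy_submodular_approximation
    {α : Type*} [Fintype α] [DecidableEq α] (f : Finset α → ℝ)
    (hsub : ∀ A B : Finset α, f (A ∪ B) + f (A ∩ B) ≤ f A + f B)
    (hmono : ∀ A B : Finset α, A ⊆ B → f A ≤ f B)
    (hempty : f ∅ = 0)
    (G : ℕ → Finset α) (hG0 : G 0 = ∅)
    (hgreedy : ∀ t : ℕ, G t ≠ Finset.univ →
      ∃ x ∉ G t, G (t + 1) = G t ∪ {x} ∧
        ∀ y ∉ G t, f (G t ∪ {y}) - f (G t) ≤ f (G t ∪ {x}) - f (G t))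
    (hfull : ∀ t : ℕ, G t = Finset.univ → G (t + 1) = G t) :
    ∀ k : ℕ, 1 ≤ k → ∀ S : Finset α, S.card ≤ k →
      (1 - (1 - 1 / (k : ℝ)) ^ k) * f S ≤ f (G k) ∧
        (1 - 1 / Real.exp 1) * f S ≤ f (G k) := by
  intro k hk S hS
  have hk1 : (1 : ℝ) ≤ k := by exact_mod_cast hk
  have hk0 : (0 : ℝ) < k := by linarith
  have hS0 : 0 ≤ f S := hempty ▸ hmono ∅ S (Finset.empty_subset S)
  have hstep : ∀ t, f S - f (G t) ≤ k * (f (G (t + 1)) - f (G t)) := by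
    intro t
    by_cases hu : G t = Finset.univ
    · rw [hfull t hu, hu]
      linarith [hmono S Finset.univ (Finset.subset_univ S)]
    · obtain ⟨x, -, hGx, hmax⟩ := hgreedy t hu
      rw [hGx]
      have hd0 := hmono (G t) (G t ∪ {x}) Finset.subset_union_left
      have hgain := union_le_add_card_mul f hsub hmono (G t) S (f (G t ∪ {x}) - f (G t)) (by
        intro y
        by_cases hy : y ∈ G t
        · rw [Finset.union_eq_left.2 (Finset.singleton_subset_iff.2 hy)]
          linarith
        · linarith [hmax y hy])
      have hcard : (S.card : ℝ) * (f (G t ∪ {x}) - f (G t)) ≤ k * (f (G t ∪ {x}) - f (G t)) :=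
        mul_le_mul_of_nonneg_right (by exact_mod_cast hS) (by linarith)
      linarith [hmono S (G t ∪ S) Finset.subset_union_right]
  have hr0 : 0 ≤ 1 - 1 / (k : ℝ) := by
    rw [sub_nonneg, div_le_one hk0]
    exact hk1
  have hgap : ∀ t, f S - f (G t) ≤ (1 - 1 / (k : ℝ)) ^ t * f S := by
    intro t
    induction t with
    | zero => simp [hG0, hempty]
    | succ t ih =>
      have h1 : (f S - f (G t)) / k ≤ f (G (t + 1)) - f (G t) := by
        rw [div_le_iff₀' hk0]
        exact hstep t
      calc f S - f (G (t + 1)) ≤ (f S - f (G t)) - (f S - f (G t)) / k := by linarith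
        _ = (1 - 1 / (k : ℝ)) * (f S - f (G t)) := by ring
        _ ≤ (1 - 1 / (k : ℝ)) * ((1 - 1 / (k : ℝ)) ^ t * f S) :=
          mul_le_mul_of_nonneg_left ih hr0
        _ = (1 - 1 / (k : ℝ)) ^ (t + 1) * f S := by ring
  have hexp : (1 - 1 / (k : ℝ)) ^ k ≤ 1 / Real.exp 1 := by
    rw [one_div (Real.exp 1), ← Real.exp_neg]
    exact Real.one_sub_div_pow_le_exp_neg hk1
  have hmul := mul_le_mul_of_nonneg_right hexp hS0
  constructor <;> linarith [hgap k]
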